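/- arXiv:2210.03708 — 8 statements merged into one kernel-verified Lean document; each statement's English description precedes it below -/
import Mathlib

section
/- Let A₁ and A₂ be complex Banach algebras and let φ : A₁ → A₂ be a continuous algebra homomorphism with dense range. If A₁ is cyclically weakly amenable, then A₂ is cyclically weakly amenable. -/
/-- `D : A → A*` (a continuous linear map into the dual) is a *derivation* when
`D(ab) = D(a)·b + a·D(b)`, where `A*` is an `A`-bimodule via `(F·a)(x) = F(ax)` and
`(a·F)(x) = F(xa)`; pairing against `x : A` gives the condition below. -/
def IsDerivation {A : Type*} [NonUnitalNormedRing A] [NormedSpace ℂ A]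
    (D : A →L[ℂ] (A →L[ℂ] ℂ)) : Prop :=
  ∀ a b x : A, D (a * b) x = D a (b * x) + D b (x * a)

/-- A map `D : A → A*` is *cyclic* when `⟨D(a), b⟩ + ⟨D(b), a⟩ = 0` for all `a, b`. -/
def IsCyclicMap {A : Type*} [NonUnitalNormedRing A] [NormedSpace ℂ A]
    (D : A →L[ℂ] (A →L[ℂ] ℂ)) : Prop :=
  ∀ a b : A, D a b + D b a = 0

/-- `D : A → A*` is *inner* if `D = ad_F` for some `F ∈ A*`, where
`ad_F(a) = F·a - a·F`, i.e. `⟨ad_F(a), x⟩ = F(ax) - F(xa)`. -/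
def IsInnerDerivation {A : Type*} [NonUnitalNormedRing A] [NormedSpace ℂ A]
    (D : A →L[ℂ] (A →L[ℂ] ℂ)) : Prop :=
  ∃ F : A →L[ℂ] ℂ, ∀ a x : A, D a x = F (a * x) - F (x * a)

/-- A Banach algebra `A` is *cyclically weakly amenable* if every continuous derivation
from `A` into `A*` is cyclic. -/
def CyclicallyWeaklyAmenable (A : Type*) [NonUnitalNormedRing A] [NormedSpace ℂ A] : Prop :=
  ∀ D : A →L[ℂ] (A →L[ℂ] ℂ), IsDerivation D → IsCyclicMap D

/-- A Banach algebra `A` is *weakly amenable* if every continuous derivation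
from `A` into `A*` is inner. -/
def WeaklyAmenable (A : Type*) [NonUnitalNormedRing A] [NormedSpace ℂ A] : Prop :=
  ∀ D : A →L[ℂ] (A →L[ℂ] ℂ), IsDerivation D → IsInnerDerivation D

/-- A Banach algebra `A` is *cyclically amenable* if every continuous cyclic derivation
from `A` into `A*` is inner. -/
def CyclicallyAmenable (A : Type*) [NonUnitalNormedRing A] [NormedSpace ℂ A] : Prop :=
  ∀ D : A →L[ℂ] (A →L[ℂ] ℂ), IsDerivation D → IsCyclicMap D → IsInnerDerivation D

/-- If `φ : A₁ → A₂` is a continuous algebra homomorphism with dense range between complex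
Banach algebras and `A₁` is cyclically weakly amenable, then so is `A₂`. -/
theorem cyclicallyWeaklyAmenable_of_denseRange_hom {A₁ A₂ : Type*}
    [NonUnitalNormedRing A₁] [NormedSpace ℂ A₁] [IsScalarTower ℂ A₁ A₁]
    [SMulCommClass ℂ A₁ A₁] [CompleteSpace A₁]
    [NonUnitalNormedRing A₂] [NormedSpace ℂ A₂] [IsScalarTower ℂ A₂ A₂]
    [SMulCommClass ℂ A₂ A₂] [CompleteSpace A₂]
    (φ : A₁ →L[ℂ] A₂) (hφmul : ∀ a b : A₁, φ (a * b) = φ a * φ b)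
    (hφdense : DenseRange φ)
    (h : CyclicallyWeaklyAmenable A₁) :
    CyclicallyWeaklyAmenable A₂ := by
  intro D hD
  have key : ∀ a b : A₁, D (φ a) (φ b) + D (φ b) (φ a) = 0 := by
    intro a b
    exact h (D.bilinearComp φ φ) (fun a b x => by
      simp only [ContinuousLinearMap.bilinearComp_apply, hφmul]
      exact hD _ _ _) a b
  intro a b
  refine hφdense.induction_on₂ (p := fun a b => D a b + D b a = 0) ?_ key a b
  refine isClosed_eq ?_ continuous_const
  fun_prop
end

section
/- Let A₁ and A₂ be complex Banach algebras and let φ : A₁ → A₂ be a continuous algebra homomorphism with dense range such that every element of A₁* is of the form F∘φ for some F ∈ A₂*. If A₁ is cyclically amenable, then A₂ is cyclically amenable. -/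
/-- If `φ : A₁ → A₂` is a continuous algebra homomorphism with dense range between complex
Banach algebras such that every functional in `A₁*` has the form `F ∘ φ` with `F ∈ A₂*`,
and `A₁` is cyclically amenable, then so is `A₂`. -/
theorem cyclicallyAmenable_of_denseRange_hom {A₁ A₂ : Type*}
    [NonUnitalNormedRing A₁] [NormedSpace ℂ A₁] [IsScalarTower ℂ A₁ A₁]
    [SMulCommClass ℂ A₁ A₁] [CompleteSpace A₁]
    [NonUnitalNormedRing A₂] [NormedSpace ℂ A₂] [IsScalarTower ℂ A₂ A₂]
    [SMulCommClass ℂ A₂ A₂] [CompleteSpace A₂]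
    (φ : A₁ →L[ℂ] A₂) (hφmul : ∀ a b : A₁, φ (a * b) = φ a * φ b)
    (hφdense : DenseRange φ)
    (hφdual : ∀ f : A₁ →L[ℂ] ℂ, ∃ F : A₂ →L[ℂ] ℂ, ∀ a : A₁, f a = F (φ a))
    (h : CyclicallyAmenable A₁) :
    CyclicallyAmenable A₂ := by
  intro D hD hc
  have key : ∀ a b : A₁,
      ((ContinuousLinearMap.compL ℂ A₁ A₂ ℂ).flip φ ∘L (D ∘L φ)) a b = D (φ a) (φ b) :=
    fun a b => rfl
  obtain ⟨f, hf⟩ := h ((ContinuousLinearMap.compL ℂ A₁ A₂ ℂ).flip φ ∘L (D ∘L φ))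
    (fun a b x => by simp only [key, hφmul]; exact hD _ _ _)
    (fun a b => by simp only [key]; exact hc _ _)
  obtain ⟨F, hF⟩ := hφdual f
  refine ⟨F, fun a x => ?_⟩
  refine hφdense.induction_on₂ (p := fun a x => D a x = F (a * x) - F (x * a)) ?_ ?_ a x
  · exact isClosed_eq (by fun_prop) (by fun_prop)
  · intro a b
    rw [← key, hf, hF, hF, hφmul, hφmul]
end

section
/- Let A₁ and A₂ be complex Banach algebras and let φ : A₁ → A₂ be a continuous algebra homomorphism with dense range such that every element of A₁* is of the form F∘φ for some F ∈ A₂*. If A₁ is weakly amenable, then A₂ is weakly amenable. -/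
/-- If `φ : A₁ → A₂` is a continuous algebra homomorphism with dense range between complex
Banach algebras such that every functional in `A₁*` has the form `F ∘ φ` with `F ∈ A₂*`,
and `A₁` is weakly amenable, then so is `A₂`. -/
theorem weaklyAmenable_of_denseRange_hom {A₁ A₂ : Type*}
    [NonUnitalNormedRing A₁] [NormedSpace ℂ A₁] [IsScalarTower ℂ A₁ A₁]
    [SMulCommClass ℂ A₁ A₁] [CompleteSpace A₁]
    [NonUnitalNormedRing A₂] [NormedSpace ℂ A₂] [IsScalarTower ℂ A₂ A₂]
    [SMulCommClass ℂ A₂ A₂] [CompleteSpace A₂]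
    (φ : A₁ →L[ℂ] A₂) (hφmul : ∀ a b : A₁, φ (a * b) = φ a * φ b)
    (hφdense : DenseRange φ)
    (hφdual : ∀ f : A₁ →L[ℂ] ℂ, ∃ F : A₂ →L[ℂ] ℂ, ∀ a : A₁, f a = F (φ a))
    (h : WeaklyAmenable A₁) :
    WeaklyAmenable A₂ := by
  intro D hD
  obtain ⟨f, hf⟩ := h (D.bilinearComp φ φ) (by
    intro a b x
    simp only [ContinuousLinearMap.bilinearComp_apply, hφmul]
    exact hD _ _ _)
  obtain ⟨F, hF⟩ := hφdual f
  refine ⟨F, fun a x => ?_⟩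
  refine hφdense.induction_on₂ (p := fun a x => D a x = F (a * x) - F (x * a)) ?_ ?_ a x
  · refine isClosed_eq ?_ ?_
    · exact (D.continuous.comp continuous_fst).clm_apply continuous_snd
    · fun_prop
  · intro a x
    have := hf a x
    simpa only [ContinuousLinearMap.bilinearComp_apply, hF, hφmul] using this
end

section
/- Let A₁ and A₂ be complex Banach algebras and let φ : A₁ → A₂ be a continuous algebra homomorphism with dense range. If A₁ is 0-point amenable, then A₂ is 0-point amenable. -/
/-- A continuous linear functional `φ` on `A` is *multiplicative* when `φ(ab) = φ(a)φ(b)`.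
The nonzero such functionals are the characters of `A` (the set `Δ(A)`); together with `0`
they form `Δ₀(A)`. -/
def IsMulFunctional {A : Type*} [NonUnitalNormedRing A] [NormedSpace ℂ A]
    (φ : A →L[ℂ] ℂ) : Prop :=
  ∀ a b : A, φ (a * b) = φ a * φ b

/-- `d ∈ A*` is a *continuous point derivation* of `A` at `φ` when
`d(ab) = d(a)φ(b) + φ(a)d(b)` for all `a, b ∈ A`. -/
def IsPointDerivationAt {A : Type*} [NonUnitalNormedRing A] [NormedSpace ℂ A]
    (φ d : A →L[ℂ] ℂ) : Prop :=
  ∀ a b : A, d (a * b) = d a * φ b + φ a * d b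

/-- `A` is *0-point amenable* if the only continuous point derivation of `A` at any
`φ ∈ Δ₀(A)` (i.e. any multiplicative functional, zero allowed) is zero. -/
def ZeroPointAmenable (A : Type*) [NonUnitalNormedRing A] [NormedSpace ℂ A] : Prop :=
  ∀ φ d : A →L[ℂ] ℂ, IsMulFunctional φ → IsPointDerivationAt φ d → d = 0

/-- `A` is *point amenable* if the only continuous point derivation of `A` at any character
`φ ∈ Δ(A)` (i.e. any nonzero multiplicative functional) is zero. -/
def PointAmenable (A : Type*) [NonUnitalNormedRing A] [NormedSpace ℂ A] : Prop :=
  ∀ φ d : A →L[ℂ] ℂ, IsMulFunctional φ → φ ≠ 0 → IsPointDerivationAt φ d → d = 0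

/-- If `φ : A₁ → A₂` is a continuous algebra homomorphism with dense range between complex
Banach algebras and `A₁` is 0-point amenable, then so is `A₂`. -/
theorem zeroPointAmenable_of_denseRange_hom {A₁ A₂ : Type*}
    [NonUnitalNormedRing A₁] [NormedSpace ℂ A₁] [IsScalarTower ℂ A₁ A₁]
    [SMulCommClass ℂ A₁ A₁] [CompleteSpace A₁]
    [NonUnitalNormedRing A₂] [NormedSpace ℂ A₂] [IsScalarTower ℂ A₂ A₂]
    [SMulCommClass ℂ A₂ A₂] [CompleteSpace A₂]
    (φ : A₁ →L[ℂ] A₂) (hφmul : ∀ a b : A₁, φ (a * b) = φ a * φ b)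
    (hφdense : DenseRange φ)
    (h : ZeroPointAmenable A₁) :
    ZeroPointAmenable A₂ := by
  intro ψ d hψ hd
  have h0 : d.comp φ = 0 := by
    refine h (ψ.comp φ) (d.comp φ) ?_ ?_
    · intro a b
      simp only [ContinuousLinearMap.comp_apply, hφmul, hψ (φ a) (φ b)]
    · intro a b
      simp only [ContinuousLinearMap.comp_apply, hφmul, hd (φ a) (φ b)]
  have h1 : (d : A₂ → ℂ) = fun _ => 0 := by
    refine hφdense.equalizer d.continuous continuous_const ?_
    funext a
    exact congrArg (fun f : A₁ →L[ℂ] ℂ => f a) h0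
  ext x
  exact congrFun h1 x
end

section
/- Let A₁ and A₂ be complex Banach algebras and let φ : A₁ → A₂ be a retraction, i.e., a continuous algebra homomorphism for which there exists a continuous algebra homomorphism ψ : A₂ → A₁ with φ∘ψ equal to the identity on A₂. If A₁ is cyclically amenable, then A₂ is cyclically amenable. -/
/-- If `φ : A₁ → A₂` is a retraction of complex Banach algebras (a continuous algebra
homomorphism admitting a continuous algebra homomorphism `ψ : A₂ → A₁` with
`φ ∘ ψ = id`), and `A₁` is cyclically amenable, then so is `A₂`. -/
theorem cyclicallyAmenable_of_retraction {A₁ A₂ : Type*}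
    [NonUnitalNormedRing A₁] [NormedSpace ℂ A₁] [IsScalarTower ℂ A₁ A₁]
    [SMulCommClass ℂ A₁ A₁] [CompleteSpace A₁]
    [NonUnitalNormedRing A₂] [NormedSpace ℂ A₂] [IsScalarTower ℂ A₂ A₂]
    [SMulCommClass ℂ A₂ A₂] [CompleteSpace A₂]
    (φ : A₁ →L[ℂ] A₂) (hφmul : ∀ a b : A₁, φ (a * b) = φ a * φ b)
    (ψ : A₂ →L[ℂ] A₁) (hψmul : ∀ a b : A₂, ψ (a * b) = ψ a * ψ b)
    (hφψ : ∀ a : A₂, φ (ψ a) = a)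
    (h : CyclicallyAmenable A₁) :
    CyclicallyAmenable A₂ := by
  intro D hD hC
  obtain ⟨F, hF⟩ := h (((ContinuousLinearMap.compL ℂ A₁ A₂ ℂ).flip φ).comp (D.comp φ))
    (fun a b x => by simpa [hφmul] using hD (φ a) (φ b) (φ x))
    (fun a b => by simpa using hC (φ a) (φ b))
  refine ⟨F.comp ψ, fun a x => ?_⟩
  simpa [hφψ, hψmul] using hF (ψ a) (ψ x)
end

section
/- Let A₁ and A₂ be complex Banach algebras and let φ : A₁ → A₂ be a retraction, i.e., a continuous algebra homomorphism for which there exists a continuous algebra homomorphism ψ : A₂ → A₁ with φ∘ψ equal to the identity on A₂. If A₁ is weakly amenable, then A₂ is weakly amenable. -/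
/-- If `φ : A₁ → A₂` is a retraction of complex Banach algebras (a continuous algebra
homomorphism admitting a continuous algebra homomorphism `ψ : A₂ → A₁` with
`φ ∘ ψ = id`), and `A₁` is weakly amenable, then so is `A₂`. -/
theorem weaklyAmenable_of_retraction {A₁ A₂ : Type*}
    [NonUnitalNormedRing A₁] [NormedSpace ℂ A₁] [IsScalarTower ℂ A₁ A₁]
    [SMulCommClass ℂ A₁ A₁] [CompleteSpace A₁]
    [NonUnitalNormedRing A₂] [NormedSpace ℂ A₂] [IsScalarTower ℂ A₂ A₂]
    [SMulCommClass ℂ A₂ A₂] [CompleteSpace A₂]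
    (φ : A₁ →L[ℂ] A₂) (hφmul : ∀ a b : A₁, φ (a * b) = φ a * φ b)
    (ψ : A₂ →L[ℂ] A₁) (hψmul : ∀ a b : A₂, ψ (a * b) = ψ a * ψ b)
    (hφψ : ∀ a : A₂, φ (ψ a) = a)
    (h : WeaklyAmenable A₁) :
    WeaklyAmenable A₂ := by
  intro D hD
  obtain ⟨F, hF⟩ := h
    (((ContinuousLinearMap.compL ℂ A₁ A₂ ℂ).flip φ).comp (D.comp φ)) (by
      intro a b x
      have := hD (φ a) (φ b) (φ x)
      simpa [hφmul] using this)
  refine ⟨F.comp ψ, fun a x => ?_⟩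
  have := hF (ψ a) (ψ x)
  simpa [hφψ, hψmul] using this
end

section
/- Let A be a complex Banach algebra and let A♯ = A ⊕ ℂ be its unitization, with multiplication (a,r)(b,s) = (ab + sa + rb, rs) and norm ‖(a,r)‖ = ‖a‖ + |r|. Then A is 0-point amenable if and only if A♯ is 0-point amenable. -/
section helpers
variable {A : Type*} [NonUnitalNormedRing A] [NormedSpace ℂ A] [IsScalarTower ℂ A A]
  [SMulCommClass ℂ A A]

noncomputable def inrU : A →L[ℂ] WithLp 1 (Unitization ℂ A) :=
  LinearMap.mkContinuous
    { toFun := fun a => WithLp.toLp 1 (a : Unitization ℂ A)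
      map_add' := fun a b => by rw [Unitization.inr_add]; rfl
      map_smul' := fun r a => by rw [Unitization.inr_smul]; rfl } 1
    (fun a => by rw [one_mul]; exact (WithLp.unitization_norm_inr a).le)

noncomputable def sndU : WithLp 1 (Unitization ℂ A) →L[ℂ] A :=
  LinearMap.mkContinuous
    { toFun := fun x => (WithLp.ofLp x).snd
      map_add' := fun a b => rfl
      map_smul' := fun r a => rfl } 1
    (fun x => by
      rw [one_mul, WithLp.unitization_norm_def]
      exact le_add_of_nonneg_left (norm_nonneg _))

noncomputable def fstU : WithLp 1 (Unitization ℂ A) →L[ℂ] ℂ :=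
  LinearMap.mkContinuous
    { toFun := fun x => (WithLp.ofLp x).fst
      map_add' := fun a b => rfl
      map_smul' := fun r a => rfl } 1
    (fun x => by
      rw [one_mul, WithLp.unitization_norm_def]
      exact le_add_of_nonneg_right (norm_nonneg _))

lemma inrU_mul (a b : A) : inrU (a * b) = inrU a * inrU b := by
  change WithLp.toLp 1 ((a * b : A) : Unitization ℂ A)
    = WithLp.toLp 1 ((a : Unitization ℂ A) * (b : Unitization ℂ A))
  rw [Unitization.inr_mul]

lemma sndU_inrU (a : A) : sndU (inrU a) = a := rfl

lemma fstU_mul (x y : WithLp 1 (Unitization ℂ A)) : fstU (x * y) = fstU x * fstU y := rfl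

lemma sndU_mul (x y : WithLp 1 (Unitization ℂ A)) :
    sndU (x * y) = fstU x • sndU y + fstU y • sndU x + sndU x * sndU y :=
  Unitization.snd_mul _ _

lemma eq_U (x : WithLp 1 (Unitization ℂ A)) :
    x = fstU x • (1 : WithLp 1 (Unitization ℂ A)) + inrU (sndU x) := by
  apply WithLp.ofLp_injective
  apply Unitization.ext
  · change x.ofLp.fst = x.ofLp.fst * 1 + 0
    simp
  · change x.ofLp.snd = x.ofLp.fst • (0 : A) + x.ofLp.snd
    simp

end helpers

/-- A complex Banach algebra `A` is 0-point amenable if and only if its unitization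
`A♯ = A ⊕ ℂ` (with multiplication `(a,r)(b,s) = (ab + sa + rb, rs)` and norm
`‖(a,r)‖ = ‖a‖ + |r|`, realized as `WithLp 1 (Unitization ℂ A)`) is 0-point amenable. -/
theorem zeroPointAmenable_unitization_iff {A : Type*}
    [NonUnitalNormedRing A] [NormedSpace ℂ A] [IsScalarTower ℂ A A]
    [SMulCommClass ℂ A A] [CompleteSpace A] :
    ZeroPointAmenable A ↔ ZeroPointAmenable (WithLp 1 (Unitization ℂ A)) := by
  constructor
  · intro h φ d hφ hd
    have h1 : d 1 = 0 := by
      have e1 := hφ 1 1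
      have e2 := hd 1 1
      rw [one_mul] at e1 e2
      have e3 : φ 1 = 0 ∨ φ 1 = 1 := by
        have : φ 1 * (φ 1 - 1) = 0 := by linear_combination -e1
        rcases mul_eq_zero.1 this with h | h
        · exact Or.inl h
        · exact Or.inr (sub_eq_zero.1 h)
      rcases e3 with e | e <;> rw [e] at e2
      · simpa using e2
      · linear_combination -e2
    have h2 : d.comp inrU = 0 := by
      refine h (φ.comp inrU) _ (fun a b => ?_) (fun a b => ?_)
      · simp only [ContinuousLinearMap.comp_apply, inrU_mul, hφ _ _]
      · simp only [ContinuousLinearMap.comp_apply, inrU_mul, hd _ _]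
    ext x
    have h3 := DFunLike.congr_fun h2 (sndU x)
    rw [ContinuousLinearMap.comp_apply] at h3
    rw [eq_U x, map_add, map_smul, h1, h3]
    simp
  · intro h φ d hφ hd
    have h2 := h (φ.comp sndU + fstU) (d.comp sndU) (fun x y => ?_) (fun x y => ?_)
    · ext a
      have h3 := DFunLike.congr_fun h2 (inrU a)
      rwa [ContinuousLinearMap.comp_apply, sndU_inrU] at h3
    · simp only [ContinuousLinearMap.add_apply, ContinuousLinearMap.comp_apply, sndU_mul, fstU_mul,
        map_add, map_smul, hφ _ _, smul_eq_mul]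
      ring
    · simp only [ContinuousLinearMap.add_apply, ContinuousLinearMap.comp_apply, sndU_mul,
        map_add, map_smul, hd _ _, smul_eq_mul]
      ring
end

section
/- Let A be a complex Banach algebra and let A♯ = A ⊕ ℂ be its unitization, with multiplication (a,r)(b,s) = (ab + sa + rb, rs) and norm ‖(a,r)‖ = ‖a‖ + |r|. Then A is cyclically amenable if and only if A♯ is cyclically amenable. -/
section helpers
variable {A : Type*} [NonUnitalNormedRing A] [NormedSpace ℂ A] [IsScalarTower ℂ A A]
    [SMulCommClass ℂ A A]

noncomputable def uInr : A →L[ℂ] WithLp 1 (Unitization ℂ A) :=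
  LinearMap.mkContinuous
    { toFun := fun a => WithLp.toLp 1 (a : Unitization ℂ A)
      map_add' := fun a b => by rw [Unitization.inr_add]; rfl
      map_smul' := fun r a => by rw [Unitization.inr_smul]; rfl } 1
    (fun a => by
      rw [one_mul]
      exact (WithLp.unitization_norm_inr (𝕜 := ℂ) a).le)

noncomputable def uSnd : WithLp 1 (Unitization ℂ A) →L[ℂ] A :=
  LinearMap.mkContinuous
    { toFun := fun u => (WithLp.ofLp u).snd
      map_add' := fun a b => rfl
      map_smul' := fun r a => rfl } 1
    (fun u => by
      rw [one_mul, WithLp.unitization_norm_def]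
      exact le_add_of_nonneg_left (norm_nonneg _))

lemma uSnd_mul (u v : WithLp 1 (Unitization ℂ A)) :
    uSnd (u * v) = (WithLp.ofLp u).fst • uSnd v + (WithLp.ofLp v).fst • uSnd u
      + uSnd u * uSnd v := rfl

lemma uSnd_uInr (a : A) : uSnd (uInr a) = a := rfl

lemma uInr_mul (a b : A) : uInr (a * b) = uInr a * uInr b :=
  congrArg (WithLp.toLp 1) (Unitization.inr_mul ℂ a b)

lemma u_decomp (u : WithLp 1 (Unitization ℂ A)) :
    u = uInr (uSnd u) + (WithLp.ofLp u).fst • (1 : WithLp 1 (Unitization ℂ A)) := by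
  apply WithLp.ofLp_injective
  apply Unitization.ext
  · change (WithLp.ofLp u).fst = 0 + (WithLp.ofLp u).fst * 1
    simp
  · change (WithLp.ofLp u).snd = (WithLp.ofLp u).snd + (WithLp.ofLp u).fst • (0 : A)
    simp

/-- Transport of a bilinear form along a continuous linear map. -/
noncomputable def pullBil {E F : Type*} [NormedAddCommGroup E] [NormedSpace ℂ E]
    [NormedAddCommGroup F] [NormedSpace ℂ F] (f : E →L[ℂ] F)
    (D : F →L[ℂ] (F →L[ℂ] ℂ)) : E →L[ℂ] (E →L[ℂ] ℂ) :=
  D.bilinearComp f f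

lemma pullBil_apply {E F : Type*} [NormedAddCommGroup E] [NormedSpace ℂ E]
    [NormedAddCommGroup F] [NormedSpace ℂ F] (f : E →L[ℂ] F)
    (D : F →L[ℂ] (F →L[ℂ] ℂ)) (x y : E) : pullBil f D x y = D (f x) (f y) := rfl

end helpers

/-- A complex Banach algebra `A` is cyclically amenable if and only if its unitization
`A♯ = A ⊕ ℂ` (with multiplication `(a,r)(b,s) = (ab + sa + rb, rs)` and norm
`‖(a,r)‖ = ‖a‖ + |r|`, realized as `WithLp 1 (Unitization ℂ A)`) is cyclically amenable. -/
theorem cyclicallyAmenable_unitization_iff {A : Type*}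
    [NonUnitalNormedRing A] [NormedSpace ℂ A] [IsScalarTower ℂ A A]
    [SMulCommClass ℂ A A] [CompleteSpace A] :
    CyclicallyAmenable A ↔ CyclicallyAmenable (WithLp 1 (Unitization ℂ A)) := by
  constructor
  · intro h D hD hC
    have h1 : ∀ x, D 1 x = 0 := fun x => by
      have := hD 1 1 x
      simp only [one_mul, mul_one] at this
      linear_combination -this
    have h2 : ∀ x, D x 1 = 0 := fun x => by
      have := hC x 1
      rwa [h1, add_zero] at this
    have key : ∀ u v, D u v = D (uInr (uSnd u)) (uInr (uSnd v)) := fun u v => by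
      conv_lhs => rw [u_decomp u, u_decomp v]
      simp only [map_add, map_smul, add_apply, smul_apply, h1, h2, smul_zero, add_zero]
    obtain ⟨F, hF⟩ := h (pullBil uInr D)
      (fun a b x => by simp only [pullBil_apply, uInr_mul]; exact hD _ _ _)
      (fun a b => hC _ _)
    refine ⟨F.comp uSnd, fun u v => ?_⟩
    have := hF (uSnd u) (uSnd v)
    rw [pullBil_apply, ← key] at this
    rw [this]
    simp only [ContinuousLinearMap.comp_apply, uSnd_mul, map_add, map_smul]
    ring
  · intro h D hD hC
    obtain ⟨G, hG⟩ := h (pullBil uSnd D)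
      (fun u v x => by
        simp only [pullBil_apply, uSnd_mul, map_add, map_smul, add_apply,
          smul_apply, hD (uSnd u) (uSnd v) (uSnd x), smul_eq_mul]
        linear_combination -(WithLp.ofLp x).fst * hC (uSnd u) (uSnd v))
      (fun u v => hC _ _)
    refine ⟨G.comp uInr, fun a x => ?_⟩
    have := hG (uInr a) (uInr x)
    simpa only [ContinuousLinearMap.comp_apply, pullBil_apply, uSnd_uInr, ← uInr_mul] using this
end
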